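/- Let $X \subseteq \mathbb{P}^{n+e}$ be a non-degenerate projective variety (reduced and irreducible) of dimension $n$, codimension $e$, and reduction number $r$, with $\deg(X) = \binom{e+r}{r} - 1$. Then the homogeneous coordinate ring $R$ of $X$ has $\mathrm{depth}(R) \ge n$. -/

import Mathlib

set_option synthInstance.maxHeartbeats 1000000
set_option maxHeartbeats 2000000

noncomputable section

open MvPolynomial

namespace Paper

variable (k : Type) [Field k]

/-- The degree-`d` graded component of `S₀/I` as a `k`-subspace. -/
def quotComponent {N : ℕ} (I : Ideal (MvPolynomial (Fin N) k)) (d : ℕ) :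
    Submodule k (MvPolynomial (Fin N) k ⧸ I) :=
  (MvPolynomial.homogeneousSubmodule (Fin N) k d).map
    (Ideal.Quotient.mkₐ k I).toLinearMap

/-- Hilbert function of `S₀/I`. -/
def hilbFn {N : ℕ} (I : Ideal (MvPolynomial (Fin N) k)) (d : ℕ) : ℕ :=
  Module.finrank k (quotComponent k I d)

/-- `I` is a homogeneous ideal. -/
def IdealHomog {N : ℕ} (I : Ideal (MvPolynomial (Fin N) k)) : Prop :=
  ∀ f ∈ I, ∀ d : ℕ, MvPolynomial.homogeneousComponent d f ∈ I

/-- `I` is saturated with respect to the irrelevant maximal ideal. -/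
def IsSaturatedIdeal {N : ℕ} (I : Ideal (MvPolynomial (Fin N) k)) : Prop :=
  ∀ f : MvPolynomial (Fin N) k, (∀ i : Fin N, MvPolynomial.X i * f ∈ I) → f ∈ I

/-- The subscheme defined by `I` is non-degenerate: `I` contains no nonzero linear form. -/
def Nondegenerate {N : ℕ} (I : Ideal (MvPolynomial (Fin N) k)) : Prop :=
  ∀ f ∈ I, f.IsHomogeneous 1 → f = 0

/-- `S₀/I` has Hilbert polynomial of degree `n` and multiplicity (degree) `D`. -/
def HasDeg {N : ℕ} (I : Ideal (MvPolynomial (Fin N) k)) (n D : ℕ) : Prop :=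
  ∃ P : Polynomial ℚ, P.natDegree = n ∧ (D : ℚ) = P.leadingCoeff * (n.factorial : ℚ) ∧
    ∀ᶠ d : ℕ in Filter.atTop, (hilbFn k I d : ℚ) = Polynomial.eval (d : ℚ) P

/-- The irrelevant maximal ideal of `S₀/I`. -/
def irrelevantIdeal {N : ℕ} (I : Ideal (MvPolynomial (Fin N) k)) :
    Ideal (MvPolynomial (Fin N) k ⧸ I) :=
  Ideal.span (Set.range fun i : Fin N => Ideal.Quotient.mk I (MvPolynomial.X i))

/-- `S₀/I` is Cohen-Macaulay of dimension `c`: there is a regular sequence of length `c`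
in the irrelevant maximal ideal. -/
def IsCMQuot {N : ℕ} (I : Ideal (MvPolynomial (Fin N) k)) (c : ℕ) : Prop :=
  ∃ rs : List (MvPolynomial (Fin N) k ⧸ I), rs.length = c ∧
    (∀ x ∈ rs, x ∈ irrelevantIdeal k I) ∧
    RingTheory.Sequence.IsRegular (MvPolynomial (Fin N) k ⧸ I) rs

/-- The ideal of `R = S₀/I` generated by the images of `x_e, …, x_{N-1}`. -/
def tailVarsIdeal {N : ℕ} (e : ℕ) (I : Ideal (MvPolynomial (Fin N) k)) :
    Ideal (MvPolynomial (Fin N) k ⧸ I) :=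
  Ideal.span {y | ∃ i : Fin N, e ≤ (i : ℕ) ∧ y = Ideal.Quotient.mk I (MvPolynomial.X i)}

/-- The reduction number `r_S(R)` of the Noether normalization by the last variables:
the least `t > 0` with `R_{t+1} = J_{t+1}` for `J = (x_e, …, x_{N-1})R`. -/
def reductionNumber {N : ℕ} (e : ℕ) (I : Ideal (MvPolynomial (Fin N) k)) : ℕ :=
  sInf {t | 0 < t ∧ quotComponent k I (t + 1) ≤ (tailVarsIdeal k e I).restrictScalars k}

/-- The reduction number `r(R)`: the minimum of `r_J(R₊)` over all minimal reductions `J`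
of `R₊`, i.e. ideals generated by `c = dim R` linear forms. -/
def redNumAll {N : ℕ} (I : Ideal (MvPolynomial (Fin N) k)) (c : ℕ) : ℕ :=
  sInf {t | 0 < t ∧ ∃ L : Finset (MvPolynomial (Fin N) k ⧸ I),
    (L : Set (MvPolynomial (Fin N) k ⧸ I)) ⊆ quotComponent k I 1 ∧ L.card = c ∧
    quotComponent k I (t + 1) ≤
      (Ideal.span (L : Set (MvPolynomial (Fin N) k ⧸ I))).restrictScalars k}

/-- The `k`-algebra map `S = k[x_e, …, x_{N-1}] → R = S₀/I`. -/
def nnMap {N : ℕ} (e : ℕ) (I : Ideal (MvPolynomial (Fin N) k)) :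
    MvPolynomial {i : Fin N // e ≤ (i : ℕ)} k →ₐ[k] (MvPolynomial (Fin N) k ⧸ I) :=
  MvPolynomial.aeval fun i => Ideal.Quotient.mk I (MvPolynomial.X i.1)

/-- `S = k[x_e, …, x_{N-1}] → R = S₀/I` is a Noether normalization. -/
def IsNoetherNormalization {N : ℕ} (e : ℕ) (I : Ideal (MvPolynomial (Fin N) k)) : Prop :=
  Function.Injective (nnMap k e I) ∧ (nnMap k e I).toRingHom.Finite

/-- `μ_S(R) = dim_k R/S₊R`, the minimal number of generators of `R` as an `S`-module. -/
def muS {N : ℕ} (e : ℕ) (I : Ideal (MvPolynomial (Fin N) k)) : ℕ :=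
  Module.finrank k ((MvPolynomial (Fin N) k ⧸ I) ⧸ tailVarsIdeal k e I)

/-- total degree of an exponent vector -/
def tdeg {N : ℕ} (a : Fin N →₀ ℕ) : ℕ := a.sum fun _ n => n

/-- degree reverse lexicographic order with `x_0 > x_1 > ⋯ > x_{N-1}`. -/
def drlLt {N : ℕ} (a b : Fin N →₀ ℕ) : Prop :=
  tdeg a < tdeg b ∨
    (tdeg a = tdeg b ∧ ∃ i : Fin N, b i < a i ∧ ∀ j : Fin N, i < j → a j = b j)

/-- `m` is the leading (largest, w.r.t. degrevlex) exponent of `p`. -/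
def IsLeadExp {N : ℕ} (p : MvPolynomial (Fin N) k) (m : Fin N →₀ ℕ) : Prop :=
  m ∈ p.support ∧ ∀ m' ∈ p.support, m' ≠ m → drlLt m' m

/-- The initial ideal of `I` with respect to the degree reverse lexicographic order. -/
def initialIdeal {N : ℕ} (I : Ideal (MvPolynomial (Fin N) k)) :
    Ideal (MvPolynomial (Fin N) k) :=
  Ideal.span {q | ∃ p ∈ I, ∃ m, IsLeadExp k p m ∧ q = MvPolynomial.monomial m 1}

/-- `p` is homogeneous of degree `d ∈ ℤ` (`0` if `d < 0`). -/
def HomogOfDeg {σ : Type} (p : MvPolynomial σ k) (d : ℤ) : Prop :=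
  p = 0 ∨ ∃ m : ℕ, (m : ℤ) = d ∧ p.IsHomogeneous m

/-- A minimal graded free resolution of the graded module `M` (with grading `Mdeg`) over
`A = k[σ]`, recording the graded Betti numbers `β i j = dim_k Tor_i^A(M,k)_{i+j}`:
the `i`-th free module has `β i j` generators in internal degree `i + j`. -/
structure MinGradedFreeRes (σ : Type) (M : Type) [AddCommGroup M]
    [Module (MvPolynomial σ k) M] [Module k M] (Mdeg : ℤ → Submodule k M) where
  β : ℕ → ℤ → ℕ
  rowFinite : ∀ i, (Function.support (β i)).Finite
  d : ∀ i : ℕ, (((j : ℤ) × Fin (β (i + 1) j)) →₀ MvPolynomial σ k) →ₗ[MvPolynomial σ k]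
      ((j : ℤ) × Fin (β i j)) →₀ MvPolynomial σ k
  ε : (((j : ℤ) × Fin (β 0 j)) →₀ MvPolynomial σ k) →ₗ[MvPolynomial σ k] M
  graded : ∀ (i : ℕ) (j j' : ℤ) (s : Fin (β (i + 1) j)) (s' : Fin (β i j')),
      HomogOfDeg k (d i (Finsupp.single ⟨j, s⟩ 1) ⟨j', s'⟩) (j + 1 - j')
  minimal : ∀ (i : ℕ) (j j' : ℤ) (s : Fin (β (i + 1) j)) (s' : Fin (β i j')),
      j' = j + 1 → d i (Finsupp.single ⟨j, s⟩ 1) ⟨j', s'⟩ = 0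
  eps_graded : ∀ (j : ℤ) (s : Fin (β 0 j)), ε (Finsupp.single ⟨j, s⟩ 1) ∈ Mdeg j
  eps_surj : Function.Surjective ε
  exact0 : Function.Exact (d 0) ε
  exactSeq : ∀ i : ℕ, Function.Exact (d (i + 1)) (d i)

/-- `Mdeg` is a grading of the `k[σ]`-module `M`. -/
def IsGrading (σ : Type) (M : Type) [AddCommGroup M]
    [Module (MvPolynomial σ k) M] [Module k M] (Mdeg : ℤ → Submodule k M) : Prop :=
  (⨆ d, Mdeg d) = ⊤ ∧ iSupIndep Mdeg ∧
    ∀ (i : σ) (d : ℤ), ∀ x ∈ Mdeg d, (MvPolynomial.X i : MvPolynomial σ k) • x ∈ Mdeg (d + 1)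

/-- The standard grading on `S₀/I` (indexed by `ℤ`). -/
def quotDeg {N : ℕ} (I : Ideal (MvPolynomial (Fin N) k)) (d : ℤ) :
    Submodule k (MvPolynomial (Fin N) k ⧸ I) :=
  if 0 ≤ d then quotComponent k I d.toNat else ⊥

/-- The standard grading on a homogeneous ideal `I ⊆ S₀` (indexed by `ℤ`). -/
def idealDeg {N : ℕ} (I : Ideal (MvPolynomial (Fin N) k)) (d : ℤ) :
    Submodule k ↥I :=
  if 0 ≤ d then
    Submodule.comap ((I.subtype).restrictScalars k)
      (MvPolynomial.homogeneousSubmodule (Fin N) k d.toNat)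
  else ⊥

/-- `χ_m = Σ_{j=0}^m (-1)^j β_{m-j,j}`. -/
def chiOf (β : ℕ → ℤ → ℕ) (m : ℤ) : ℤ :=
  if m < 0 then 0
  else ∑ j ∈ Finset.range (m.toNat + 1), (-1 : ℤ) ^ j * (β (m.toNat - j) (j : ℤ) : ℤ)

/-- projective dimension read off from a minimal resolution's Betti table -/
def pdOf (β : ℕ → ℤ → ℕ) : ℕ∞ :=
  ⨆ i : {i : ℕ // ∃ j, β i j ≠ 0}, ((i : ℕ) : ℕ∞)

/-- index type of the variables `x_t, …, x_{N-1}` -/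
def tailIdx (N t : ℕ) := {i : Fin N // t ≤ (i : ℕ)}


/-- The `S = k[x_e,…,x_{N-1}]`-module structure on `R = S₀/I` via `nnMap`. -/
def nnModule {N : ℕ} (e : ℕ) (I : Ideal (MvPolynomial (Fin N) k)) :
    Module (MvPolynomial {i : Fin N // e ≤ (i : ℕ)} k) (MvPolynomial (Fin N) k ⧸ I) :=
  Module.compHom _ (nnMap k e I).toRingHom

/-- The underlying set of the `S`-submodule of `R = S₀/I` spanned by `s`. -/
def nnSpan {N : ℕ} (e : ℕ) (I : Ideal (MvPolynomial (Fin N) k))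
    (s : Set (MvPolynomial (Fin N) k ⧸ I)) : Set (MvPolynomial (Fin N) k ⧸ I) :=
  letI := nnModule k e I
  (Submodule.span (MvPolynomial {i : Fin N // e ≤ (i : ℕ)} k) s : Set _)

/-- The truncated ideal `(I)_{≥ r+1}`, generated by the homogeneous elements of `I`
of degree at least `r + 1`. -/
def truncIdeal {N : ℕ} (I : Ideal (MvPolynomial (Fin N) k)) (r : ℕ) :
    Ideal (MvPolynomial (Fin N) k) :=
  Ideal.span {f | f ∈ I ∧ ∃ d : ℕ, r + 1 ≤ d ∧ f.IsHomogeneous d}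

end Paper

end

/-
Write `D = C(e+r, r) - 1`. A linear reduction `ℓ₀, …, ℓₙ` with reduction number `r` makes `R` a
finite torsion-free module over the polynomial ring `S = k[x₀, …, xₙ]`, generated by the monomials
of degree at most `r` in the `e` remaining linear forms, that is, by at most `C(e+r, r)`
homogeneous elements. Comparing Hilbert functions, `D` is at most the rank of `R` over `S`, so the
module of relations between these generators has rank at most one. Being the kernel of a map to a
torsion-free module over a factorial ring, it is generated by a single vector `v`, so
`R ≃ S^N / S v`. If `v ≠ 0`, choose a line through the origin on which some coordinate of `v` does
not vanish. The `n` linear forms cutting out the line form a regular sequence on `S`, each initial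
segment generates a prime ideal not containing that coordinate, and hence the sequence is weakly
regular on `S^N / S v`.
-/

open MvPolynomial DirectSum

section Growth

theorem leadingCoeff_le_of_eventually_eval_le {P : Polynomial ℚ} {n : ℕ}
    (hdeg : P.natDegree = n) {C : ℚ} (c : ℕ)
    (h : ∀ᶠ d : ℕ in Filter.atTop, P.eval (d : ℚ) ≤ C * ((d : ℚ) + c) ^ n) :
    P.leadingCoeff ≤ C := by
  set Q : Polynomial ℚ := (Polynomial.X + Polynomial.C (c : ℚ)) ^ n with hQ
  have hQmonic : Q.Monic := (Polynomial.monic_X_add_C _).pow _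
  have hlim : Filter.Tendsto (fun d : ℕ ↦ P.eval (d : ℚ) / Q.eval (d : ℚ)) Filter.atTop
      (nhds P.leadingCoeff) := by
    rcases eq_or_ne P 0 with rfl | hP
    · simp
    · have hPQ : P.degree = Q.degree := by
        rw [Polynomial.degree_eq_natDegree hP, hdeg, hQ, Polynomial.degree_pow,
          Polynomial.degree_X_add_C, nsmul_one]
      simpa [hQmonic.leadingCoeff, Function.comp_def] using
        (Polynomial.div_tendsto_atTop_leadingCoeff_div_of_degree_eq P Q hPQ).comp
          (tendsto_natCast_atTop_atTop (R := ℚ))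
  refine le_of_tendsto hlim ?_
  filter_upwards [h, Filter.eventually_gt_atTop 0] with d hd hpos
  have : (0 : ℚ) < d := by exact_mod_cast hpos
  have hQd : Q.eval (d : ℚ) = ((d : ℚ) + c) ^ n := by simp [hQ]
  rw [hQd, div_le_iff₀ (by positivity)]
  exact hd

theorem leadingCoeff_mul_factorial_le_of_eventually_eval_le_choose {P : Polynomial ℚ} {n : ℕ}
    (hdeg : P.natDegree = n) {ρ : ℕ} (c : ℕ) (h : ∀ᶠ d : ℕ in Filter.atTop,
      P.eval (d : ℚ) ≤ ρ * ((d + c).choose n : ℕ)) :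
    P.leadingCoeff * n.factorial ≤ ρ := by
  have hfact : (0 : ℚ) < n.factorial := by positivity
  rw [← le_div_iff₀ hfact]
  refine leadingCoeff_le_of_eventually_eval_le hdeg c (h.mono fun d hd ↦ hd.trans ?_)
  have hchoose := Nat.choose_le_pow_div (α := ℚ) n (d + c)
  push_cast at hchoose
  rw [div_mul_eq_mul_div, mul_div_assoc]
  gcongr

end Growth

section GradedModule

variable {k M : Type*} [Field k] [AddCommGroup M] [Module k M]

theorem finrank_homogeneousSubmodule (n d : ℕ) :
    Module.finrank k (homogeneousSubmodule (Fin (n + 1)) k d) = (d + n).choose n := by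
  have hset : {m : Fin (n + 1) →₀ ℕ | m.degree = d} =
      ((Finset.univ : Finset (Fin (n + 1))).finsuppAntidiag d : Set _) := by
    ext m
    simp [Finsupp.degree_eq_sum]
  rw [homogeneousSubmodule_eq_finsupp_supported]
  change Module.finrank k (restrictSupport k {m : Fin (n + 1) →₀ ℕ | m.degree = d}) = _
  rw [Module.finrank_eq_nat_card_basis (basisRestrictSupport k _), hset, Nat.card_coe_set_eq,
    Set.ncard_coe_finset, Finset.card_finsuppAntidiag_nat_eq_choose, Finset.card_univ,
    Fintype.card_fin, Nat.add_right_comm, Nat.add_sub_cancel, add_comm n d, Nat.choose_symm_add]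

instance finiteDimensional_homogeneousSubmodule (n d : ℕ) :
    FiniteDimensional k (homogeneousSubmodule (Fin (n + 1)) k d) :=
  Module.Finite.iff_fg.mpr (homogeneousSubmodule_fg _ _ _)

section Homogeneous

variable {σ : Type*} [Module (MvPolynomial σ k) M] (ℳ : ℕ → Submodule k M)
  [Decomposition ℳ] [SetLike.GradedSMul (homogeneousSubmodule σ k) ℳ]

theorem coe_decompose_smul_of_mem (a : MvPolynomial σ k) {x : M} {d : ℕ} (hx : x ∈ ℳ d) (D : ℕ) :
    (decompose ℳ (a • x) D : M) = if d ≤ D then homogeneousComponent (D - d) a • x else 0 := by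
  have hmem (i : ℕ) : homogeneousComponent i a • x ∈ ℳ (i + d) :=
    SetLike.GradedSMul.smul_mem (A := homogeneousSubmodule σ k)
      (homogeneousComponent_isHomogeneous i a) hx
  have hsum : (decompose ℳ (a • x) D : M) = ∑ i ∈ Finset.range (a.totalDegree + 1),
      (decompose ℳ (homogeneousComponent i a • x) D : M) := by
    conv_lhs => rw [← sum_homogeneousComponent a]
    rw [Finset.sum_smul, decompose_sum, DFinsupp.finsetSum_apply, Submodule.coe_sum]
  rw [hsum]
  split_ifs with hdD
  · rw [Finset.sum_eq_single (D - d)]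
    · exact decompose_of_mem_same ℳ (by simpa [hdD] using hmem (D - d))
    · exact fun i _ hi ↦ decompose_of_mem_ne ℳ (hmem i) (by omega)
    · intro hi
      have hlt : a.totalDegree < D - d := by rw [Finset.mem_range] at hi; omega
      rw [homogeneousComponent_eq_zero _ _ hlt, zero_smul, decompose_zero]
      rfl
  · exact Finset.sum_eq_zero fun i _ ↦ decompose_of_mem_ne ℳ (hmem i) (by omega)

variable {ι : Type*} {m : ι → M} {deg : ι → ℕ}

theorem coe_decompose_sum_smul [Fintype ι] (hm : ∀ i, m i ∈ ℳ (deg i))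
    (a : ι → MvPolynomial σ k) (D : ℕ) :
    (decompose ℳ (∑ i, a i • m i) D : M) =
      ∑ i, (if deg i ≤ D then homogeneousComponent (D - deg i) (a i) else 0) • m i := by
  rw [decompose_sum, DFinsupp.finsetSum_apply, Submodule.coe_sum]
  simp only [coe_decompose_smul_of_mem ℳ _ (hm _), ite_smul, zero_smul]

theorem isHomogeneous_span_range [Finite ι] (hm : ∀ i, m i ∈ ℳ (deg i)) :
    (Submodule.span (MvPolynomial σ k) (Set.range m)).IsHomogeneous ℳ := by
  intro D x hx
  have := Fintype.ofFinite ι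
  obtain ⟨a, rfl⟩ := (Submodule.mem_span_range_iff_exists_fun _).mp hx
  rw [coe_decompose_sum_smul ℳ hm]
  exact sum_mem fun i _ ↦ Submodule.smul_mem _ _ (Submodule.subset_span ⟨i, rfl⟩)

theorem exists_homogeneous_smul_mem [Finite ι] {N : Submodule (MvPolynomial σ k) M}
    (hN : N.IsHomogeneous ℳ) (hm : ∀ i, m i ∈ ℳ (deg i))
    (hspan : Submodule.span (MvPolynomial σ k) (Set.range m) = ⊤)
    (htors : ∀ i, ∃ a : MvPolynomial σ k, a ≠ 0 ∧ a • m i ∈ N) :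
    ∃ (δ : ℕ) (s : MvPolynomial σ k), s.IsHomogeneous δ ∧ s ≠ 0 ∧ ∀ x : M, s • x ∈ N := by
  classical
  have := Fintype.ofFinite ι
  choose a ha0 ha using htors
  set b := ∏ i, a i with hb
  have hb0 : b ≠ 0 := Finset.prod_ne_zero_iff.mpr fun i _ ↦ ha0 i
  have hbm (i : ι) : b • m i ∈ N := by
    rw [hb, ← Finset.prod_erase_mul _ _ (Finset.mem_univ i), mul_smul]
    exact N.smul_mem _ (ha i)
  obtain ⟨δ, hδ⟩ : ∃ δ, homogeneousComponent δ b ≠ 0 := by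
    by_contra! hzero
    exact hb0 (by rw [← sum_homogeneousComponent b, Finset.sum_eq_zero fun i _ ↦ hzero i])
  have hδm (i : ι) : homogeneousComponent δ b • m i ∈ N := by
    have hcomp := hN (deg i + δ) (hbm i)
    rwa [coe_decompose_smul_of_mem ℳ b (hm i), if_pos (Nat.le_add_right _ _),
      Nat.add_sub_cancel_left] at hcomp
  refine ⟨δ, _, homogeneousComponent_isHomogeneous δ b, hδ, fun x ↦ ?_⟩
  have hle : Submodule.span (MvPolynomial σ k) (Set.range m) ≤
      N.comap (LinearMap.lsmul (MvPolynomial σ k) M (homogeneousComponent δ b)) :=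
    Submodule.span_le.mpr (by rintro _ ⟨i, rfl⟩; exact hδm i)
  exact hle (hspan ▸ Submodule.mem_top)

end Homogeneous

section Rank

variable {n : ℕ} [Module (MvPolynomial (Fin (n + 1)) k) M]
  [IsScalarTower k (MvPolynomial (Fin (n + 1)) k) M]
  (ℳ : ℕ → Submodule k M) [Decomposition ℳ]
  [SetLike.GradedSMul (homogeneousSubmodule (Fin (n + 1)) k) ℳ]
  {ι : Type*} {m : ι → M} {deg : ι → ℕ}

theorem rank_inf_span_range_le [Fintype ι] (hm : ∀ i, m i ∈ ℳ (deg i)) (D : ℕ) :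
    Module.rank k ↥(ℳ D ⊓ (Submodule.span (MvPolynomial (Fin (n + 1)) k)
      (Set.range m)).restrictScalars k) ≤ (Fintype.card ι * (D + n).choose n : ℕ) := by
  let F : (∀ i, homogeneousSubmodule (Fin (n + 1)) k (D - deg i)) →ₗ[k] M :=
    ∑ i, (LinearMap.toSpanSingleton (MvPolynomial (Fin (n + 1)) k) M (m i)).restrictScalars k ∘ₗ
      (homogeneousSubmodule (Fin (n + 1)) k (D - deg i)).subtype ∘ₗ LinearMap.proj i
  have hle : ℳ D ⊓ (Submodule.span (MvPolynomial (Fin (n + 1)) k)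
      (Set.range m)).restrictScalars k ≤ LinearMap.range F := by
    rintro x ⟨hxD, hx⟩
    obtain ⟨a, rfl⟩ := (Submodule.mem_span_range_iff_exists_fun _).mp hx
    refine ⟨fun i ↦ ⟨if deg i ≤ D then homogeneousComponent (D - deg i) (a i) else 0, ?_⟩, ?_⟩
    · split_ifs
      exacts [homogeneousComponent_isHomogeneous _ _, zero_mem _]
    · rw [← decompose_of_mem_same ℳ hxD, coe_decompose_sum_smul ℳ hm]
      simp [F]
  refine (Submodule.rank_mono hle).trans ?_
  rw [← Module.finrank_eq_rank, Nat.cast_le]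
  calc _ ≤ _ := LinearMap.finrank_range_le F
    _ = ∑ i, (D - deg i + n).choose n := by
      simp only [Module.finrank_pi_fintype, finrank_homogeneousSubmodule]
    _ ≤ ∑ _i : ι, (D + n).choose n :=
      Finset.sum_le_sum fun i _ ↦ Nat.choose_le_choose _ (by omega)
    _ = _ := by simp

theorem finrank_le_of_forall_smul_mem_span [Fintype ι]
    [Module.IsTorsionFree (MvPolynomial (Fin (n + 1)) k) M] (hm : ∀ i, m i ∈ ℳ (deg i))
    {s : MvPolynomial (Fin (n + 1)) k} {δ : ℕ}
    (hs : s.IsHomogeneous δ) (hs0 : s ≠ 0)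
    (hspan : ∀ x : M, s • x ∈ Submodule.span (MvPolynomial (Fin (n + 1)) k) (Set.range m)) (d : ℕ) :
    Module.finrank k (ℳ d) ≤ Fintype.card ι * (d + (δ + n)).choose n := by
  have hmem (x : ℳ d) : s • (x : M) ∈ ℳ (δ + d) :=
    SetLike.GradedSMul.smul_mem (A := homogeneousSubmodule (Fin (n + 1)) k) hs x.2
  let F : ℳ d →ₗ[k] ↥(ℳ (δ + d) ⊓ (Submodule.span (MvPolynomial (Fin (n + 1)) k)
      (Set.range m)).restrictScalars k) :=
    ((LinearMap.lsmul _ M s).restrictScalars k ∘ₗ (ℳ d).subtype).codRestrict _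
      fun x ↦ ⟨hmem x, hspan x⟩
  have hF : Function.Injective F := fun x y hxy ↦
    Subtype.ext (smul_right_injective M hs0 (congrArg Subtype.val hxy))
  rw [add_left_comm, ← add_assoc]
  exact Module.finrank_le_of_rank_le
    ((F.rank_le_of_injective hF).trans (rank_inf_span_range_le ℳ hm (δ + d)))

theorem leadingCoeff_mul_factorial_le_finrank [Finite ι]
    [Module.IsTorsionFree (MvPolynomial (Fin (n + 1)) k) M] (hm : ∀ i, m i ∈ ℳ (deg i))
    (hspan : Submodule.span (MvPolynomial (Fin (n + 1)) k) (Set.range m) = ⊤)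
    {P : Polynomial ℚ} (hdeg : P.natDegree = n)
    (hP : ∀ᶠ d : ℕ in Filter.atTop, (Module.finrank k (ℳ d) : ℚ) = P.eval (d : ℚ)) :
    P.leadingCoeff * n.factorial ≤ Module.finrank (MvPolynomial (Fin (n + 1)) k) M := by
  obtain ⟨B, hB, hmax⟩ := exists_maximal_linearIndepOn (MvPolynomial (Fin (n + 1)) k) m
  have hrange : m '' B = Set.range fun i : B ↦ m i := Set.image_eq_range _ _
  have htors (i : ι) : ∃ a : MvPolynomial (Fin (n + 1)) k, a ≠ 0 ∧
      a • m i ∈ Submodule.span (MvPolynomial (Fin (n + 1)) k) (Set.range fun i : B ↦ m i) := by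
    by_cases hi : i ∈ B
    · exact ⟨1, one_ne_zero, by rw [one_smul]; exact Submodule.subset_span ⟨⟨i, hi⟩, rfl⟩⟩
    · exact hrange ▸ hmax i hi
  have hmB (i : B) : m i ∈ ℳ (deg i) := hm i
  have := Fintype.ofFinite B
  obtain ⟨δ, s, hs, hs0, hsM⟩ :=
    exists_homogeneous_smul_mem ℳ (isHomogeneous_span_range ℳ hmB) hm hspan htors
  have hfin : Module.Finite (MvPolynomial (Fin (n + 1)) k) M :=
    ⟨hspan ▸ Submodule.fg_span (Set.finite_range m)⟩
  have hcard : Fintype.card B ≤ Module.finrank (MvPolynomial (Fin (n + 1)) k) M :=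
    hB.fintype_card_le_finrank
  refine leadingCoeff_mul_factorial_le_of_eventually_eval_le_choose hdeg (δ + n)
    (hP.mono fun d hd ↦ ?_)
  rw [← hd]
  exact_mod_cast (finrank_le_of_forall_smul_mem_span ℳ hmB hs hs0 hsM d).trans
    (Nat.mul_le_mul_right _ hcard)

end Rank

end GradedModule

section SpanPower

variable {A B : Type*} [CommSemiring A] [CommSemiring B] [Algebra A B]

theorem span_range_pow_eq_span_range_sym {ι : Type*} (t : ι → B) (r : ℕ) :
    Submodule.span A (Set.range t) ^ r =
      Submodule.span A (Set.range fun s : Sym ι r ↦ ((s : Multiset ι).map t).prod) := by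
  rw [Submodule.span_pow]
  congr 1
  ext x
  rw [Set.mem_pow]
  constructor
  · rintro ⟨f, rfl⟩
    choose g hg using fun i ↦ (f i).2
    refine ⟨⟨Multiset.ofList (List.ofFn g), by simp⟩, ?_⟩
    simp only [Sym.coe_mk, Multiset.map_coe, Multiset.prod_coe, List.map_ofFn]
    exact congrArg _ (congrArg _ (funext hg))
  · rintro ⟨⟨s, hs⟩, rfl⟩
    induction s using Quotient.inductionOn with
    | h l =>
      obtain rfl : l.length = r := by simpa using hs
      refine ⟨fun i ↦ ⟨t l[i], Set.mem_range_self _⟩, ?_⟩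
      simp

theorem pow_le_restrictScalars_pow {k : Type*} [CommSemiring k] [Algebra k A] [Algebra k B]
    [IsScalarTower k A B] {V : Submodule k B} {W : Submodule A B}
    (hVW : V ≤ W.restrictScalars k) (d : ℕ) : V ^ d ≤ (W ^ d).restrictScalars k := by
  rcases eq_or_ne d 0 with rfl | hd
  · rw [pow_zero, pow_zero, Submodule.one_le]
    exact (Submodule.one_le (P := (1 : Submodule A B))).mp le_rfl
  · rw [Submodule.restrictScalars_pow hd]
    exact pow_le_pow_left' hVW d

end SpanPower

section Reduction

variable {k R : Type*} [Field k] [CommRing R] [Algebra k R] {𝒜 : ℕ → Submodule k R}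

theorem mem_mul_of_mem_ideal_span [GradedAlgebra 𝒜] {ι : Type*} [Finite ι] {ℓ : ι → R}
    (hℓ : ∀ i, ℓ i ∈ 𝒜 1) {d : ℕ} {x : R} (hx : x ∈ 𝒜 (d + 1))
    (hxℓ : x ∈ Ideal.span (Set.range ℓ)) : x ∈ Submodule.span k (Set.range ℓ) * 𝒜 d := by
  have := Fintype.ofFinite ι
  obtain ⟨w, rfl⟩ := Ideal.mem_span_range_iff_exists_fun.mp hxℓ
  rw [← decompose_of_mem_same 𝒜 hx, decompose_sum, DFinsupp.finsetSum_apply, Submodule.coe_sum]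
  refine sum_mem fun i _ ↦ ?_
  rw [mul_comm (w i), add_comm, coe_decompose_mul_add_of_left_mem 𝒜 (hℓ i)]
  exact Submodule.mul_mem_mul (Submodule.subset_span ⟨i, rfl⟩) (SetLike.coe_mem _)

theorem component_add_le_pow_mul (h𝒜 : ∀ d, 𝒜 d = 𝒜 1 ^ d) {L : Submodule k R} {r : ℕ}
    (hL : 𝒜 (r + 1) ≤ L * 𝒜 r) (d : ℕ) : 𝒜 (r + d) ≤ L ^ d * 𝒜 r := by
  have hsucc (j : ℕ) : 𝒜 (j + 1) = 𝒜 j * 𝒜 1 := by rw [h𝒜, h𝒜 j, pow_succ]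
  induction d with
  | zero => simp
  | succ d ih =>
    calc 𝒜 (r + (d + 1)) = 𝒜 (r + d) * 𝒜 1 := hsucc _
      _ ≤ L ^ d * 𝒜 r * 𝒜 1 := mul_le_mul' ih le_rfl
      _ = L ^ d * 𝒜 (r + 1) := by rw [mul_assoc, ← hsucc]
      _ ≤ L ^ d * (L * 𝒜 r) := mul_le_mul' le_rfl hL
      _ = L ^ (d + 1) * 𝒜 r := by rw [← mul_assoc, pow_succ]

theorem map_homogeneousSubmodule_le (h𝒜 : ∀ d, 𝒜 d = 𝒜 1 ^ d) {σ : Type*}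
    {φ : MvPolynomial σ k →ₐ[k] R} (hφ : ∀ i, φ (X i) ∈ 𝒜 1) (d : ℕ) :
    (homogeneousSubmodule σ k d).map φ.toLinearMap ≤ 𝒜 d := by
  have h1 : (homogeneousSubmodule σ k 1).map φ.toLinearMap ≤ 𝒜 1 := by
    rw [homogeneousSubmodule_one_eq_span_X, Submodule.map_span_le]
    rintro _ ⟨i, rfl⟩
    exact hφ i
  rw [← homogeneousSubmodule_one_pow, Submodule.map_pow, h𝒜 d]
  exact pow_le_pow_left' h1 d

end Reduction

section Noether

variable {k R σ : Type*} [Field k] [CommRing R] [Algebra k R]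
  [Algebra (MvPolynomial σ k) R] [IsScalarTower k (MvPolynomial σ k) R]
  {𝒜 : ℕ → Submodule k R} [GradedAlgebra 𝒜]

theorem gradedSMul_of_algebraMap_X_mem (h𝒜 : ∀ d, 𝒜 d = 𝒜 1 ^ d)
    (hX : ∀ i, algebraMap (MvPolynomial σ k) R (X i) ∈ 𝒜 1) :
    SetLike.GradedSMul (homogeneousSubmodule σ k) 𝒜 where
  smul_mem {i j a x} ha hx := by
    rw [Algebra.smul_def]
    exact SetLike.mul_mem_graded (map_homogeneousSubmodule_le h𝒜
      (φ := IsScalarTower.toAlgHom k (MvPolynomial σ k) R) hX i ⟨a, ha, rfl⟩) hx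

theorem pow_eq_top_of_component_one_le [Finite σ] (h𝒜 : ∀ d, 𝒜 d = 𝒜 1 ^ d)
    (hX : ∀ i, algebraMap (MvPolynomial σ k) R (X i) ∈ 𝒜 1)
    {r : ℕ} (hr : 𝒜 (r + 1) ≤ (Ideal.span (Set.range fun i ↦
      algebraMap (MvPolynomial σ k) R (X i))).restrictScalars k)
    {W : Submodule (MvPolynomial σ k) R} (h1 : 1 ≤ W) (hW : 𝒜 1 ≤ W.restrictScalars k) :
    W ^ r = ⊤ := by
  set L := Submodule.span k (Set.range fun i ↦ algebraMap (MvPolynomial σ k) R (X i))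
  have hL : 𝒜 (r + 1) ≤ L * 𝒜 r := fun x hx ↦ mem_mul_of_mem_ideal_span hX hx (hr hx)
  have hL1 : L ≤ (1 : Submodule (MvPolynomial σ k) R).restrictScalars k :=
    Submodule.span_le.mpr (by rintro _ ⟨i, rfl⟩; exact Submodule.algebraMap_mem _)
  have hWpow (d : ℕ) : 𝒜 d ≤ (W ^ d).restrictScalars k :=
    (h𝒜 d).trans_le (pow_le_restrictScalars_pow hW d)
  have hle (d : ℕ) : 𝒜 d ≤ (W ^ r).restrictScalars k := by
    rcases le_total d r with hd | hd
    · exact (hWpow d).trans (Submodule.restrictScalars_mono k (pow_le_pow_right' h1 hd))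
    · obtain ⟨c, rfl⟩ := Nat.exists_eq_add_of_le hd
      calc 𝒜 (r + c) ≤ L ^ c * 𝒜 r := component_add_le_pow_mul h𝒜 hL c
        _ ≤ (1 ^ c : Submodule (MvPolynomial σ k) R).restrictScalars k *
              (W ^ r).restrictScalars k :=
          mul_le_mul' (pow_le_restrictScalars_pow hL1 c) (hWpow r)
        _ = (W ^ r).restrictScalars k := by
          rw [← Submodule.restrictScalars_mul, one_pow, one_mul]
  have htop : (⨆ d, 𝒜 d) = ⊤ := (Decomposition.isInternal 𝒜).submodule_iSup_eq_top
  rw [← Submodule.restrictScalars_eq_top_iff k, eq_top_iff, ← htop]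
  exact iSup_le hle

end Noether

theorem algebraMap_injective_of_ringKrullDim {k R σ : Type*} [Field k] [CommRing R] [IsDomain R]
    [Fintype σ] [Algebra (MvPolynomial σ k) R] [Module.Finite (MvPolynomial σ k) R]
    (hdim : ringKrullDim R = Fintype.card σ) :
    Function.Injective (algebraMap (MvPolynomial σ k) R) := by
  rw [injective_iff_map_eq_zero]
  intro f hf
  by_contra hf0
  let φ := (Algebra.ofId (MvPolynomial σ k) R).rangeRestrict
  have hint : Algebra.IsIntegral (Algebra.ofId (MvPolynomial σ k) R).range R :=
    Algebra.IsIntegral.tower_top (R := MvPolynomial σ k)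
  have hle : ringKrullDim R ≤ ringKrullDim (Algebra.ofId (MvPolynomial σ k) R).range :=
    Order.krullDim_le_of_strictMono (PrimeSpectrum.comap (algebraMap _ R))
      fun I J hIJ ↦ Ideal.IsIntegral.comap_lt_comap (I := I.asIdeal) (J := J.asIdeal) hIJ
  have hlt := ringKrullDim_succ_le_of_surjective φ.toRingHom
    (Algebra.ofId (MvPolynomial σ k) R).rangeRestrict_surjective
    (mem_nonZeroDivisors_of_ne_zero hf0) (Subtype.ext hf)
  have := (add_le_add_left hle 1).trans hlt
  rw [MvPolynomial.ringKrullDim_of_isNoetherianRing, ringKrullDim_eq_zero_of_field, zero_add,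
    hdim, Nat.card_eq_fintype_card] at this
  norm_cast at this
  omega

section Complement

variable {k V : Type*} [Field k] [AddCommGroup V] [Module k V]

theorem exists_sup_span_range_eq {U W : Submodule k V} [FiniteDimensional k W] (hUW : U ≤ W) :
    ∃ (d : ℕ) (t : Fin d → V), Module.finrank k U + d = Module.finrank k W ∧
      U ⊔ Submodule.span k (Set.range t) = W := by
  obtain ⟨Q, hQ⟩ := exists_isCompl U
  have hsup : U ⊔ Q ⊓ W = W := by rw [← sup_inf_assoc_of_le Q hUW, hQ.sup_eq_top, top_inf_eq]
  have hinf : U ⊓ (Q ⊓ W) = ⊥ := by rw [← inf_assoc, hQ.inf_eq_bot, bot_inf_eq]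
  have hU : FiniteDimensional k U := Submodule.finiteDimensional_of_le hUW
  have hQW : FiniteDimensional k (Q ⊓ W : Submodule k V) :=
    Submodule.finiteDimensional_of_le inf_le_right
  have : FiniteDimensional k (Submodule.span k ((Q ⊓ W : Submodule k V) : Set V)) := by
    rwa [Submodule.span_eq]
  obtain ⟨t, -, ht, -⟩ :=
    Submodule.exists_fun_fin_finrank_span_eq k ((Q ⊓ W : Submodule k V) : Set V)
  refine ⟨_, t, ?_, by rw [ht, Submodule.span_eq, hsup]⟩
  rw [Submodule.span_eq, ← Submodule.finrank_sup_add_finrank_inf_eq, hsup, hinf, finrank_bot,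
    add_zero]

end Complement

section Generators

variable {k R : Type*} [Field k] [CommRing R] [Algebra k R] {𝒜 : ℕ → Submodule k R}

theorem multiset_prod_map_mem_graded [GradedAlgebra 𝒜] {ι : Type*} {t : ι → R} {deg : ι → ℕ}
    (ht : ∀ i, t i ∈ 𝒜 (deg i)) (s : Multiset ι) : (s.map t).prod ∈ 𝒜 (s.map deg).sum := by
  induction s using Quotient.inductionOn with
  | h l => simpa using SetLike.list_prod_map_mem_graded l deg t fun i _ ↦ ht i

variable {σ : Type*} [Algebra (MvPolynomial σ k) R] [IsScalarTower k (MvPolynomial σ k) R]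
  [GradedAlgebra 𝒜]

theorem finite_of_component_le_ideal_span [Finite σ] [FiniteDimensional k (𝒜 1)]
    (h𝒜 : ∀ d, 𝒜 d = 𝒜 1 ^ d)
    (hX : ∀ i, algebraMap (MvPolynomial σ k) R (X i) ∈ 𝒜 1)
    {r : ℕ} (hr : 𝒜 (r + 1) ≤ (Ideal.span (Set.range fun i ↦
      algebraMap (MvPolynomial σ k) R (X i))).restrictScalars k) :
    Module.Finite (MvPolynomial σ k) R := by
  obtain ⟨s, hs⟩ := Module.Finite.iff_fg.mp ‹FiniteDimensional k (𝒜 1)›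
  let W := Submodule.span (MvPolynomial σ k) (insert 1 (s : Set R))
  have h1 : 1 ≤ W := Submodule.one_le.mpr (Submodule.subset_span (Set.mem_insert _ _))
  have hW : 𝒜 1 ≤ W.restrictScalars k := by
    rw [← hs]
    exact Submodule.span_le.mpr ((Set.subset_insert _ _).trans Submodule.subset_span)
  have hfg : W.FG := Submodule.fg_span (s.finite_toSet.insert 1)
  exact ⟨pow_eq_top_of_component_one_le h𝒜 hX hr h1 hW ▸ hfg.pow r⟩

theorem exists_homogeneous_generators {n e r : ℕ}
    [Algebra (MvPolynomial (Fin (n + 1)) k) R] [IsScalarTower k (MvPolynomial (Fin (n + 1)) k) R]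
    [FiniteDimensional k (𝒜 1)] (h𝒜 : ∀ d, 𝒜 d = 𝒜 1 ^ d)
    (hinj : Function.Injective (algebraMap (MvPolynomial (Fin (n + 1)) k) R))
    (hX : ∀ i, algebraMap (MvPolynomial (Fin (n + 1)) k) R (X i) ∈ 𝒜 1)
    (hr : 𝒜 (r + 1) ≤ (Ideal.span (Set.range fun i ↦
      algebraMap (MvPolynomial (Fin (n + 1)) k) R (X i))).restrictScalars k)
    (he : Module.finrank k (𝒜 1) ≤ n + 1 + e) :
    ∃ (d : ℕ) (m : Sym (Option (Fin d)) r → R) (deg : Sym (Option (Fin d)) r → ℕ), d ≤ e ∧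
      (∀ s, m s ∈ 𝒜 (deg s)) ∧
      Submodule.span (MvPolynomial (Fin (n + 1)) k) (Set.range m) = ⊤ := by
  let L := Submodule.span k (Set.range fun i ↦ algebraMap (MvPolynomial (Fin (n + 1)) k) R (X i))
  have hL : L ≤ 𝒜 1 := Submodule.span_le.mpr (by rintro _ ⟨i, rfl⟩; exact hX i)
  have hLrank : Module.finrank k L = n + 1 := by
    have : LinearIndependent k fun i ↦ algebraMap (MvPolynomial (Fin (n + 1)) k) R (X i) :=
      (linearIndependent_X (Fin (n + 1)) k).map'
        (IsScalarTower.toAlgHom k (MvPolynomial (Fin (n + 1)) k) R).toLinearMap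
        (LinearMap.ker_eq_bot.mpr hinj)
    simpa using finrank_span_eq_card this
  obtain ⟨d, t, hd, ht⟩ := exists_sup_span_range_eq hL
  let t' : Option (Fin d) → R := fun o ↦ o.elim 1 t
  have ht' (o : Option (Fin d)) : t' o ∈ 𝒜 (o.elim 0 fun _ ↦ 1) := by
    cases o with
    | none => exact SetLike.GradedOne.one_mem
    | some i => exact ht ▸ Submodule.mem_sup_right (Submodule.subset_span ⟨i, rfl⟩)
  refine ⟨d, _, _, by omega, fun s ↦ multiset_prod_map_mem_graded ht' s, ?_⟩
  rw [← span_range_pow_eq_span_range_sym]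
  have h1 : 1 ∈ Submodule.span (MvPolynomial (Fin (n + 1)) k) (Set.range t') :=
    Submodule.subset_span ⟨none, rfl⟩
  refine pow_eq_top_of_component_one_le h𝒜 hX hr (Submodule.one_le.mpr h1) ?_
  rw [← ht]
  refine sup_le (Submodule.span_le.mpr ?_) (Submodule.span_le.mpr ?_)
  · rintro _ ⟨i, rfl⟩
    exact Submodule.one_le.mpr h1 (Submodule.algebraMap_mem _)
  · rintro _ ⟨i, rfl⟩
    exact Submodule.subset_span ⟨some i, rfl⟩

end Generators

section Syzygy

variable {S ι : Type*} [CommRing S] [IsDomain S]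

theorem exists_eq_smul_of_smul_eq_smul_of_gcd_eq_one [Fintype ι] [NormalizedGCDMonoid S] {a b : S}
    {u v : ι → S} (hv : Finset.univ.gcd v = 1) (hb : b ≠ 0) (h : b • u = a • v) :
    ∃ c : S, u = c • v := by
  have hdvd : b ∣ Finset.univ.gcd fun i ↦ a * v i :=
    Finset.dvd_gcd fun i _ ↦ ⟨u i, (congrFun h i).symm⟩
  rw [(Finset.gcd_mul_left' _ v a).dvd_iff_dvd_right, hv, mul_one] at hdvd
  obtain ⟨c, rfl⟩ := hdvd
  exact ⟨c, funext fun i ↦ mul_left_cancel₀ hb ((congrFun h i).trans (mul_assoc b c (v i)))⟩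

variable [UniqueFactorizationMonoid S]

theorem exists_eq_span_singleton_of_finrank_le_one [Finite ι] {N : Submodule S (ι → S)}
    (hN : Module.finrank S N ≤ 1) (hsat : ∀ (c : S) (u : ι → S), c ≠ 0 → c • u ∈ N → u ∈ N) :
    ∃ v, N = Submodule.span S {v} := by
  have := Fintype.ofFinite ι
  let _ : NormalizedGCDMonoid S := Nonempty.some inferInstance
  rcases eq_or_ne N ⊥ with rfl | hN0
  · exact ⟨0, by simp⟩
  have hrank : Module.rank S N ≤ 1 := by
    rw [← Cardinal.cast_toNat_of_lt_aleph0
      ((Submodule.rank_le N).trans_lt (Module.rank_lt_aleph0 S _))]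
    exact_mod_cast hN
  obtain ⟨w, hw, hw0⟩ := Submodule.exists_mem_ne_zero_of_ne_bot hN0
  obtain ⟨j, -⟩ := Function.ne_iff.mp hw0
  obtain ⟨v, hwv, hv⟩ := Finset.extract_gcd w ⟨j, Finset.mem_univ j⟩
  obtain ⟨g, rfl⟩ : ∃ g : S, w = g • v := ⟨_, funext fun i ↦ hwv i (Finset.mem_univ i)⟩
  rw [smul_ne_zero_iff] at hw0
  have hvN : v ∈ N := hsat g v hw0.1 hw
  refine ⟨v, le_antisymm (fun u hu ↦ ?_) ((Submodule.span_singleton_le_iff_mem v N).mpr hvN)⟩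
  have hdep : ¬ LinearIndependent S ![(⟨v, hvN⟩ : N), ⟨u, hu⟩] := fun h ↦ by
    have := h.cardinal_lift_le_rank.trans (Cardinal.lift_le.mpr hrank)
    norm_num at this
  obtain ⟨a, b, hab, hne⟩ : ∃ a b : S, a • v + b • u = 0 ∧ ¬ (a = 0 ∧ b = 0) := by
    simpa [LinearIndependent.pair_iff, Subtype.ext_iff] using hdep
  have hb : b ≠ 0 := by
    rintro rfl
    simp_all
  obtain ⟨c, rfl⟩ := exists_eq_smul_of_smul_eq_smul_of_gcd_eq_one (a := -a) hv hb
    (by rw [neg_smul, eq_neg_of_add_eq_zero_right hab])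
  exact Submodule.smul_mem _ c (Submodule.mem_span_singleton_self v)

theorem exists_ker_linearCombination_eq_span_singleton [Fintype ι] {M : Type*}
    [AddCommGroup M] [Module S M] [Module.IsTorsionFree S M] {m : ι → M}
    (hspan : Submodule.span S (Set.range m) = ⊤)
    (hcard : Fintype.card ι ≤ Module.finrank S M + 1) :
    ∃ v, LinearMap.ker (Fintype.linearCombination S m) = Submodule.span S {v} := by
  refine exists_eq_span_singleton_of_finrank_le_one ?_ fun c u hc hu ↦ ?_
  · have h := Submodule.finrank_quotient_add_finrank
      (LinearMap.ker (Fintype.linearCombination S m))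
    have hsurj : LinearMap.range (Fintype.linearCombination S m) = ⊤ := by
      rw [Fintype.range_linearCombination, hspan]
    rw [((Fintype.linearCombination S m).quotKerEquivOfSurjective
      (LinearMap.range_eq_top.mp hsurj)).finrank_eq, Module.finrank_fintype_fun_eq_card] at h
    omega
  · rw [LinearMap.mem_ker, map_smul] at hu
    exact (smul_eq_zero.mp hu).resolve_left hc

end Syzygy

section WeaklyRegular

open RingTheory.Sequence
open scoped Pointwise

variable {S : Type*} [CommRing S]

section Quotient

variable {F : Type*} [AddCommGroup F] [Module S F]

theorem mkQ_mem_smul_top_iff (J : Ideal S) (N : Submodule S F) (x : F) :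
    N.mkQ x ∈ J • (⊤ : Submodule S (F ⧸ N)) ↔ x ∈ N ⊔ J • ⊤ := by
  rw [← Submodule.comap_map_mkQ, Submodule.map_smul'', Submodule.map_top, Submodule.range_mkQ,
    Submodule.mem_comap]

theorem ofList_take_add_one {ys : List S} {i : ℕ} (hi : i < ys.length) :
    Ideal.ofList (ys.take (i + 1)) = Ideal.ofList (ys.take i) ⊔ Ideal.span {ys[i]} := by
  rw [List.take_succ_eq_append_getElem hi, Ideal.ofList_append, Ideal.ofList_singleton]

/- If `y x = b + w` with `b ∈ q F` and `w ∈ N`, then `w ∈ N ∩ (q, y) F = (q, y) N`, say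
`w = w₀ + y w₁`, and `y (x - w₁) ∈ q F`. -/
theorem isWeaklyRegular_quotient_of_inf_le {N : Submodule S F} {ys : List S}
    (hys : IsWeaklyRegular F ys)
    (hN : ∀ i < ys.length,
      N ⊓ Ideal.ofList (ys.take (i + 1)) • ⊤ ≤ Ideal.ofList (ys.take (i + 1)) • N) :
    IsWeaklyRegular (F ⧸ N) ys := by
  refine ⟨fun i hi ↦ (isSMulRegular_quotient_iff_mem_of_smul_mem _ _).mpr fun z hz ↦ ?_⟩
  obtain ⟨x, rfl⟩ := N.mkQ_surjective z
  have hreg := (isSMulRegular_quotient_iff_mem_of_smul_mem _ _).mp (hys.regular_mod_prev i hi)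
  have hsucc := ofList_take_add_one hi
  set q := Ideal.ofList (ys.take i)
  set y := ys[i]
  rw [← map_smul, mkQ_mem_smul_top_iff] at hz
  rw [mkQ_mem_smul_top_iff]
  obtain ⟨w, hw, b, hb, hwb⟩ := Submodule.mem_sup.mp hz
  have hw' : w ∈ q • N ⊔ y • N := by
    have := hN i hi ⟨hw, ?_⟩
    · rwa [hsucc, Submodule.sup_smul, Submodule.ideal_span_singleton_smul] at this
    · rw [hsucc, Submodule.sup_smul, Submodule.ideal_span_singleton_smul,
        eq_sub_of_add_eq hwb, sub_eq_neg_add]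
      exact Submodule.add_mem_sup (neg_mem hb) (Submodule.smul_mem_pointwise_smul _ _ _ trivial)
  obtain ⟨w₀, hw₀, yw₁, hyw₁, hww⟩ := Submodule.mem_sup.mp hw'
  obtain ⟨w₁, hw₁, rfl⟩ := (Submodule.mem_smul_pointwise_iff_exists _ _ _).mp hyw₁
  have hx : x - w₁ ∈ q • (⊤ : Submodule S F) := by
    apply hreg
    have : y • (x - w₁) = w₀ + b := by rw [smul_sub, ← hwb, ← hww]; abel
    rw [this]
    exact add_mem (Submodule.smul_mono le_rfl le_top hw₀) hb
  rw [← add_sub_cancel w₁ x]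
  exact Submodule.add_mem_sup hw₁ hx

end Quotient

theorem isWeaklyRegular_of_isPrime {ys : List S}
    (hprime : ∀ i < ys.length, (Ideal.ofList (ys.take i)).IsPrime)
    (hnot : ∀ i (hi : i < ys.length), ys[i] ∉ Ideal.ofList (ys.take i)) :
    IsWeaklyRegular S ys := by
  refine ⟨fun i hi ↦ (isSMulRegular_quotient_iff_mem_of_smul_mem _ _).mpr fun x hx ↦ ?_⟩
  rw [smul_eq_mul, Ideal.mul_top] at hx ⊢
  exact ((hprime i hi).mem_or_mem hx).resolve_left (hnot i hi)

variable {ι : Type*}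

theorem isWeaklyRegular_of_flat (F : Type*) [AddCommGroup F] [Module S F] [Module.Flat S F]
    {ys : List S} (hys : IsWeaklyRegular S ys) : IsWeaklyRegular F ys :=
  ((TensorProduct.rid S F).isWeaklyRegular_congr ys).mp hys.isWeaklyRegular_lTensor

theorem apply_mem_of_mem_smul_top {J : Ideal S} {w : ι → S}
    (hw : w ∈ J • (⊤ : Submodule S (ι → S))) (i : ι) : w i ∈ J := by
  induction hw using Submodule.smul_induction_on' with
  | smul c hc x _ => exact J.mul_mem_right (x i) hc
  | add x _ y _ hx hy => exact J.add_mem hx hy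

theorem span_singleton_inf_smul_top_le {J : Ideal S} [hJ : J.IsPrime] {v : ι → S} {i : ι}
    (hv : v i ∉ J) : Submodule.span S {v} ⊓ J • ⊤ ≤ J • Submodule.span S {v} := by
  rintro w ⟨hw, hwJ⟩
  obtain ⟨c, rfl⟩ := Submodule.mem_span_singleton.mp hw
  have hc : c ∈ J := (hJ.mem_or_mem (apply_mem_of_mem_smul_top hwJ i)).resolve_right hv
  exact Submodule.smul_mem_smul hc (Submodule.mem_span_singleton_self v)

theorem isWeaklyRegular_pi_quotient_span_singleton [Finite ι] {ys : List S}
    (hys : IsWeaklyRegular S ys) (hprime : ∀ i, (Ideal.ofList (ys.take i)).IsPrime)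
    {v : ι → S} {i : ι} (hv : v i ∉ Ideal.ofList ys) :
    IsWeaklyRegular ((ι → S) ⧸ Submodule.span S {v}) ys := by
  refine isWeaklyRegular_quotient_of_inf_le (isWeaklyRegular_of_flat _ hys) fun j _ ↦ ?_
  have := hprime (j + 1)
  exact span_singleton_inf_smul_top_le (i := i) fun hmem ↦
    hv (Ideal.span_mono (fun _ hx ↦ List.mem_of_mem_take hx) hmem)

end WeaklyRegular

section Line

variable {k : Type*} [Field k] {n : ℕ}

/-- The linear forms `x_{j+1} - p_j x₀` cutting out the line through the origin and the point
`(1, p)` of affine `(n + 1)`-space. -/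
noncomputable def lineForm (p : Fin n → k) (j : Fin n) : MvPolynomial (Fin (n + 1)) k :=
  X j.succ - C (p j) * X 0

/-- The substitution `x_{j+1} ↦ p_j x₀` for `j < i`, whose kernel is the prime ideal generated by
the first `i` of the forms `lineForm p`. -/
noncomputable def lineSubst (p : Fin n → k) (i : ℕ) :
    MvPolynomial (Fin (n + 1)) k →ₐ[k] MvPolynomial (Fin (n + 1)) k :=
  aeval (Fin.cons (X 0) fun j : Fin n ↦ if (j : ℕ) < i then C (p j) * X 0 else X j.succ)

theorem isHomogeneous_lineForm (p : Fin n → k) (j : Fin n) : (lineForm p j).IsHomogeneous 1 :=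
  (isHomogeneous_X k _).sub (by simpa using (isHomogeneous_C _ (p j)).mul (isHomogeneous_X k 0))

theorem mem_take_ofFn_iff {α : Type*} {f : Fin n → α} {i : ℕ} {x : α} :
    x ∈ (List.ofFn f).take i ↔ ∃ j : Fin n, (j : ℕ) < i ∧ f j = x := by
  simp only [List.mem_take_iff_getElem, List.length_ofFn, List.getElem_ofFn, lt_min_iff]
  exact ⟨fun ⟨j, hj, h⟩ ↦ ⟨⟨j, hj.2⟩, hj.1, h⟩, fun ⟨j, hj, h⟩ ↦ ⟨j, ⟨hj, j.2⟩, h⟩⟩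

theorem ofList_take_lineForm_eq_ker (p : Fin n → k) (i : ℕ) :
    Ideal.ofList ((List.ofFn (lineForm p)).take i) = RingHom.ker (lineSubst p i) := by
  refine le_antisymm (Ideal.span_le.mpr fun y hy ↦ ?_) fun f hf ↦ ?_
  · obtain ⟨j, hj, rfl⟩ := mem_take_ofFn_iff.mp hy
    simp [RingHom.mem_ker, lineSubst, lineForm, hj, algebraMap_eq]
  · set q := Ideal.ofList ((List.ofFn (lineForm p)).take i)
    have hcomp : (Ideal.Quotient.mkₐ k q).comp (lineSubst p i) = Ideal.Quotient.mkₐ k q := by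
      refine algHom_ext fun l ↦ ?_
      cases l using Fin.cases with
      | zero => simp [lineSubst]
      | succ j =>
        by_cases hj : (j : ℕ) < i
        · have : lineForm p j ∈ q := Ideal.subset_span (mem_take_ofFn_iff.mpr ⟨j, hj, rfl⟩)
          simpa [lineSubst, hj] using (Ideal.Quotient.eq.mpr this).symm
        · simp [lineSubst, hj]
    have := AlgHom.congr_fun hcomp f
    rw [AlgHom.comp_apply, RingHom.mem_ker.mp hf, map_zero] at this
    exact Ideal.Quotient.eq_zero_iff_mem.mp this.symm

theorem isPrime_ofList_take_lineForm (p : Fin n → k) (i : ℕ) :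
    (Ideal.ofList ((List.ofFn (lineForm p)).take i)).IsPrime :=
  ofList_take_lineForm_eq_ker p i ▸ RingHom.ker_isPrime _

theorem lineForm_notMem_ofList_take (p : Fin n → k) (j : Fin n) :
    lineForm p j ∉ Ideal.ofList ((List.ofFn (lineForm p)).take j) := by
  rw [ofList_take_lineForm_eq_ker, RingHom.mem_ker]
  intro h
  have := congrArg (eval (Pi.single j.succ 1)) h
  simp [lineSubst, lineForm, algebraMap_eq] at this

theorem exists_notMem_ofList_lineForm [Infinite k] {f : MvPolynomial (Fin (n + 1)) k}
    (hf : f ≠ 0) : ∃ p : Fin n → k, f ∉ Ideal.ofList (List.ofFn (lineForm p)) := by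
  obtain ⟨a, ha⟩ : ∃ a, eval a (f * X 0) ≠ 0 := by
    by_contra! h
    exact mul_ne_zero hf (X_ne_zero 0) (funext fun a ↦ by rw [h a, map_zero])
  rw [map_mul, eval_X, mul_ne_zero_iff] at ha
  refine ⟨fun j ↦ a j.succ / a 0, fun hmem ↦ ha.1 ?_⟩
  have hle : Ideal.ofList (List.ofFn (lineForm fun j ↦ a j.succ / a 0)) ≤
      RingHom.ker (eval a) := by
    refine Ideal.span_le.mpr fun y hy ↦ ?_
    obtain ⟨j, rfl⟩ := (List.mem_ofFn' _ _).mp hy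
    simp [RingHom.mem_ker, lineForm, ha.2]
  exact hle hmem

theorem isWeaklyRegular_lineForm (p : Fin n → k) :
    RingTheory.Sequence.IsWeaklyRegular (MvPolynomial (Fin (n + 1)) k)
      (List.ofFn (lineForm p)) := by
  refine isWeaklyRegular_of_isPrime (fun i _ ↦ isPrime_ofList_take_lineForm p i) fun i hi ↦ ?_
  rw [List.getElem_ofFn]
  exact lineForm_notMem_ofList_take p ⟨i, by simpa using hi⟩

theorem exists_isWeaklyRegular_lineForm_quotient_span_singleton [Infinite k] {ι : Type*}
    [Finite ι] (v : ι → MvPolynomial (Fin (n + 1)) k) :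
    ∃ p : Fin n → k, RingTheory.Sequence.IsWeaklyRegular
      ((ι → MvPolynomial (Fin (n + 1)) k) ⧸ Submodule.span (MvPolynomial (Fin (n + 1)) k) {v})
      (List.ofFn (lineForm p)) := by
  rcases eq_or_ne v 0 with rfl | hv
  · exact ⟨0, isWeaklyRegular_quotient_of_inf_le
      (isWeaklyRegular_of_flat _ (isWeaklyRegular_lineForm 0)) (by simp)⟩
  · obtain ⟨i, hi⟩ := Function.ne_iff.mp hv
    obtain ⟨p, hp⟩ := exists_notMem_ofList_lineForm hi
    exact ⟨p, isWeaklyRegular_pi_quotient_span_singleton (isWeaklyRegular_lineForm p)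
      (isPrime_ofList_take_lineForm p) hp⟩

end Line

theorem exists_isWeaklyRegular_lineForm {k M ι : Type*} [Field k] [Infinite k] {n : ℕ}
    [AddCommGroup M] [Module (MvPolynomial (Fin (n + 1)) k) M]
    [Module.IsTorsionFree (MvPolynomial (Fin (n + 1)) k) M] [Fintype ι] {m : ι → M}
    (hspan : Submodule.span (MvPolynomial (Fin (n + 1)) k) (Set.range m) = ⊤)
    (hcard : Fintype.card ι ≤ Module.finrank (MvPolynomial (Fin (n + 1)) k) M + 1) :
    ∃ p : Fin n → k, RingTheory.Sequence.IsWeaklyRegular M (List.ofFn (lineForm p)) := by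
  obtain ⟨v, hv⟩ := exists_ker_linearCombination_eq_span_singleton hspan hcard
  obtain ⟨p, hp⟩ := exists_isWeaklyRegular_lineForm_quotient_span_singleton v
  have hsurj : Function.Surjective
      (Fintype.linearCombination (MvPolynomial (Fin (n + 1)) k) m) := by
    rw [← LinearMap.range_eq_top, Fintype.range_linearCombination, hspan]
  rw [← hv] at hp
  exact ⟨p, ((LinearMap.quotKerEquivOfSurjective _ hsurj).isWeaklyRegular_congr _).mp hp⟩

section Algebra

variable {k R : Type*} [Field k] [Infinite k] [CommRing R] [IsDomain R] [Algebra k R]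
  {𝒜 : ℕ → Submodule k R} [GradedAlgebra 𝒜] [FiniteDimensional k (𝒜 1)] {n e r : ℕ}
  {P : Polynomial ℚ}

theorem exists_isWeaklyRegular_algebraMap_lineForm [Algebra (MvPolynomial (Fin (n + 1)) k) R]
    [IsScalarTower k (MvPolynomial (Fin (n + 1)) k) R] (h𝒜 : ∀ d, 𝒜 d = 𝒜 1 ^ d)
    (hdim : ringKrullDim R = n + 1) (he : Module.finrank k (𝒜 1) ≤ n + 1 + e)
    (hX : ∀ i, algebraMap (MvPolynomial (Fin (n + 1)) k) R (X i) ∈ 𝒜 1)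
    (hr : 𝒜 (r + 1) ≤ (Ideal.span (Set.range fun i ↦
      algebraMap (MvPolynomial (Fin (n + 1)) k) R (X i))).restrictScalars k)
    (hdeg : P.natDegree = n)
    (hP : ∀ᶠ d : ℕ in Filter.atTop, (Module.finrank k (𝒜 d) : ℚ) = P.eval (d : ℚ))
    (hle : ((e + r).choose r : ℚ) ≤ P.leadingCoeff * n.factorial + 1) :
    ∃ p : Fin n → k, RingTheory.Sequence.IsWeaklyRegular R
      ((List.ofFn (lineForm p)).map (algebraMap (MvPolynomial (Fin (n + 1)) k) R)) := by
  have hfin := finite_of_component_le_ideal_span h𝒜 hX hr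
  have hinj : Function.Injective (algebraMap (MvPolynomial (Fin (n + 1)) k) R) :=
    algebraMap_injective_of_ringKrullDim (by simpa using hdim)
  have : FaithfulSMul (MvPolynomial (Fin (n + 1)) k) R :=
    (faithfulSMul_iff_algebraMap_injective _ _).mpr hinj
  have := gradedSMul_of_algebraMap_X_mem h𝒜 hX
  obtain ⟨d, m, deg, hd, hm, hspan⟩ := exists_homogeneous_generators h𝒜 hinj hX hr he
  have hcard : Fintype.card (Sym (Option (Fin d)) r) ≤
      Module.finrank (MvPolynomial (Fin (n + 1)) k) R + 1 := by
    rw [Sym.card_sym_eq_choose, Fintype.card_option, Fintype.card_fin, Nat.add_right_comm,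
      Nat.add_sub_cancel]
    have hrank := leadingCoeff_mul_factorial_le_finrank 𝒜 hm hspan hdeg hP
    have : ((e + r).choose r : ℚ) ≤ Module.finrank (MvPolynomial (Fin (n + 1)) k) R + 1 := by
      linarith
    exact (Nat.choose_le_choose r (Nat.add_le_add_right hd r)).trans (by exact_mod_cast this)
  obtain ⟨p, hp⟩ := exists_isWeaklyRegular_lineForm hspan hcard
  exact ⟨p, (RingTheory.Sequence.isWeaklyRegular_map_algebraMap_iff R R _).mpr hp⟩

theorem exists_isWeaklyRegular_of_choose_le (h𝒜 : ∀ d, 𝒜 d = 𝒜 1 ^ d)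
    (hdim : ringKrullDim R = n + 1) (he : Module.finrank k (𝒜 1) ≤ n + 1 + e)
    {ℓ : Fin (n + 1) → R} (hℓ : ∀ i, ℓ i ∈ 𝒜 1)
    (hr : 𝒜 (r + 1) ≤ (Ideal.span (Set.range ℓ)).restrictScalars k)
    (hdeg : P.natDegree = n)
    (hP : ∀ᶠ d : ℕ in Filter.atTop, (Module.finrank k (𝒜 d) : ℚ) = P.eval (d : ℚ))
    (hle : ((e + r).choose r : ℚ) ≤ P.leadingCoeff * n.factorial + 1) :
    ∃ rs : List R, rs.length = n ∧ (∀ x ∈ rs, x ∈ 𝒜 1) ∧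
      RingTheory.Sequence.IsWeaklyRegular R rs := by
  let _ : Algebra (MvPolynomial (Fin (n + 1)) k) R := (aeval ℓ).toAlgebra
  have : IsScalarTower k (MvPolynomial (Fin (n + 1)) k) R :=
    .of_algebraMap_eq fun c ↦ ((aeval ℓ).commutes c).symm
  have hX (i) : algebraMap (MvPolynomial (Fin (n + 1)) k) R (X i) = ℓ i := aeval_X ℓ i
  obtain ⟨p, hp⟩ := exists_isWeaklyRegular_algebraMap_lineForm h𝒜 hdim he
    (by simpa only [hX] using hℓ) (by simpa only [hX] using hr) hdeg hP hle
  refine ⟨_, by simp, fun x hx ↦ ?_, hp⟩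
  obtain ⟨y, hy, rfl⟩ := List.mem_map.mp hx
  obtain ⟨j, rfl⟩ := (List.mem_ofFn' _ _).mp hy
  exact map_homogeneousSubmodule_le h𝒜 (φ := aeval ℓ) (by simpa using hℓ) 1
    ⟨_, isHomogeneous_lineForm p j, rfl⟩

end Algebra

section QuotientGrading

variable {k : Type} [Field k] {N : ℕ} (I : Ideal (MvPolynomial (Fin N) k))

theorem quotComponent_eq_pow (d : ℕ) :
    Paper.quotComponent k I d = Paper.quotComponent k I 1 ^ d := by
  rw [Paper.quotComponent, ← homogeneousSubmodule_one_pow, Submodule.map_pow, Paper.quotComponent]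

theorem quotComponent_one_eq_span :
    Paper.quotComponent k I 1 =
      Submodule.span k (Set.range fun i ↦ Ideal.Quotient.mk I (X i)) := by
  rw [Paper.quotComponent, homogeneousSubmodule_one_eq_span_X, Submodule.map_span, ← Set.range_comp]
  rfl

instance finiteDimensional_quotComponent_one : FiniteDimensional k (Paper.quotComponent k I 1) := by
  rw [quotComponent_one_eq_span]
  exact FiniteDimensional.span_of_finite k (Set.finite_range _)

theorem finrank_quotComponent_one_le : Module.finrank k (Paper.quotComponent k I 1) ≤ N := by
  rw [quotComponent_one_eq_span]
  exact (finrank_range_le_card _).trans (Fintype.card_fin N).le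

theorem quotComponent_one_le_irrelevantIdeal :
    Paper.quotComponent k I 1 ≤ (Paper.irrelevantIdeal k I).restrictScalars k := by
  rw [quotComponent_one_eq_span]
  exact Submodule.span_le.mpr Submodule.subset_span

variable {I}

theorem irrelevantIdeal_ne_top (hI : Paper.IdealHomog k I) (hne : I ≠ ⊤) :
    Paper.irrelevantIdeal k I ≠ ⊤ := by
  have hconst (f) (hf : f ∈ I) : constantCoeff f = 0 := by
    by_contra h0
    have hC := hI f hf 0
    rw [homogeneousComponent_zero] at hC
    exact hne (Ideal.eq_top_of_isUnit_mem _ hC ((isUnit_iff_ne_zero.mpr h0).map C))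
  let φ := Ideal.Quotient.lift I (constantCoeff (σ := Fin N) (R := k)) hconst
  have hle : Paper.irrelevantIdeal k I ≤ RingHom.ker φ := by
    refine Ideal.span_le.mpr ?_
    rintro _ ⟨i, rfl⟩
    simp [RingHom.mem_ker, φ]
  exact fun htop ↦ RingHom.ker_ne_top φ (top_le_iff.mp (htop ▸ hle))

/-- The projection of `S₀/I` onto its degree-`d` component, induced by `homogeneousComponent d`. -/
noncomputable def quotProj (hI : Paper.IdealHomog k I) (d : ℕ) :
    (MvPolynomial (Fin N) k ⧸ I) →ₗ[k] MvPolynomial (Fin N) k ⧸ I :=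
  Submodule.liftQ (I.restrictScalars k)
    ((Ideal.Quotient.mkₐ k I).toLinearMap ∘ₗ homogeneousComponent d)
    fun f hf ↦ Ideal.Quotient.eq_zero_iff_mem.mpr (hI f hf d)

theorem quotProj_of_mem (hI : Paper.IdealHomog k I) {d : ℕ} {x : MvPolynomial (Fin N) k ⧸ I}
    (hx : x ∈ Paper.quotComponent k I d) (i : ℕ) :
    quotProj hI i x = if i = d then x else 0 := by
  obtain ⟨f, hf, rfl⟩ := hx
  change Ideal.Quotient.mk I (homogeneousComponent i f) = _
  rw [homogeneousComponent_of_mem hf]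
  split_ifs
  exacts [rfl, map_zero _]

theorem quotProj_coeAddMonoidHom (hI : Paper.IdealHomog k I)
    (v : ⨁ d, Paper.quotComponent k I d) (i : ℕ) :
    quotProj hI i (DirectSum.coeAddMonoidHom (Paper.quotComponent k I) v) = v i := by
  induction v using DirectSum.induction_on with
  | zero => simp
  | of d x =>
    rw [coeAddMonoidHom_of, quotProj_of_mem hI x.2, coe_of_apply]
    split_ifs <;> simp_all
  | add v w hv hw => simp [hv, hw]

theorem isInternal_quotComponent (hI : Paper.IdealHomog k I) :
    IsInternal (Paper.quotComponent k I) := by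
  refine ⟨(injective_iff_map_eq_zero _).mpr fun v hv ↦ DFinsupp.ext fun d ↦ Subtype.ext ?_,
    fun x ↦ ?_⟩
  · rw [← quotProj_coeAddMonoidHom hI v d, hv, map_zero]
    rfl
  · obtain ⟨f, rfl⟩ := Ideal.Quotient.mk_surjective x
    refine ⟨∑ d ∈ Finset.range (f.totalDegree + 1),
      DirectSum.of (fun d ↦ Paper.quotComponent k I d) d
        ⟨_, homogeneousComponent d f, homogeneousComponent_isHomogeneous d f, rfl⟩, ?_⟩
    rw [map_sum]
    simp only [coeAddMonoidHom_of]
    exact (map_sum (Ideal.Quotient.mkₐ k I) _ _).symm.trans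
      (congrArg _ (sum_homogeneousComponent f))

/-- The grading of `S₀/I` by the components `quotComponent k I d`. -/
noncomputable abbrev quotGradedAlgebra (hI : Paper.IdealHomog k I) :
    GradedAlgebra (Paper.quotComponent k I) where
  one_mem := ⟨1, isHomogeneous_one _ _, rfl⟩
  mul_mem := by
    rintro i j _ _ ⟨f, hf, rfl⟩ ⟨g, hg, rfl⟩
    exact ⟨f * g, hf.mul hg, rfl⟩
  toDecomposition := (isInternal_quotComponent hI).chooseDecomposition

theorem isRegular_of_forall_mem_irrelevantIdeal (hI : Paper.IdealHomog k I) (hne : I ≠ ⊤)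
    {rs : List (MvPolynomial (Fin N) k ⧸ I)} (hrs : ∀ x ∈ rs, x ∈ Paper.irrelevantIdeal k I)
    (hreg : RingTheory.Sequence.IsWeaklyRegular (MvPolynomial (Fin N) k ⧸ I) rs) :
    RingTheory.Sequence.IsRegular (MvPolynomial (Fin N) k ⧸ I) rs := by
  refine ⟨hreg, fun htop ↦ irrelevantIdeal_ne_top hI hne (top_le_iff.mp ?_)⟩
  rw [htop, smul_eq_mul, Ideal.mul_top]
  exact Ideal.span_le.mpr hrs

end QuotientGrading

section Reduction

variable {k : Type} [Field k] {N : ℕ} {I : Ideal (MvPolynomial (Fin N) k)}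

theorem exists_quotComponent_redNumAll_le {c : ℕ} (h : Paper.redNumAll k I c ≠ 0) :
    ∃ ℓ : Fin c → MvPolynomial (Fin N) k ⧸ I, (∀ i, ℓ i ∈ Paper.quotComponent k I 1) ∧
      Paper.quotComponent k I (Paper.redNumAll k I c + 1) ≤
        (Ideal.span (Set.range ℓ)).restrictScalars k := by
  obtain ⟨-, L, hL, hcard, hle⟩ := Nat.sInf_mem (Nat.nonempty_of_pos_sInf (Nat.pos_of_ne_zero h))
  let q := L.equivFinOfCardEq hcard
  refine ⟨fun i ↦ q.symm i, fun i ↦ hL (q.symm i).2, ?_⟩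
  have hrange : Set.range (fun i ↦ (q.symm i : MvPolynomial (Fin N) k ⧸ I)) = L := by
    rw [← Function.comp_def, q.symm.surjective.range_comp, Subtype.range_coe_subtype]
    rfl
  rwa [hrange]

theorem hasDeg_zero_right {n : ℕ} (h : Paper.HasDeg k I n 0) : n = 0 := by
  obtain ⟨P, hdeg, hlead, -⟩ := h
  have hP : P = 0 := by simpa [n.factorial_ne_zero] using hlead
  rw [← hdeg, hP, Polynomial.natDegree_zero]

end Reduction

theorem stmt19_general (k : Type) [Field k] [Infinite k] (n e : ℕ)
    (I : Ideal (MvPolynomial (Fin (n + e + 1)) k)) (hprime : I.IsPrime)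
    (hIhom : Paper.IdealHomog k I)
    (hdim : ringKrullDim (MvPolynomial (Fin (n + e + 1)) k ⧸ I) = n + 1)
    (hD : Paper.HasDeg k I n
      ((e + Paper.redNumAll k I (n + 1)).choose (Paper.redNumAll k I (n + 1)) - 1)) :
    ∃ rs : List (MvPolynomial (Fin (n + e + 1)) k ⧸ I), rs.length = n ∧
      (∀ x ∈ rs, x ∈ Paper.irrelevantIdeal k I) ∧
      RingTheory.Sequence.IsRegular (MvPolynomial (Fin (n + e + 1)) k ⧸ I) rs := by
  suffices ∃ rs : List (MvPolynomial (Fin (n + e + 1)) k ⧸ I), rs.length = n ∧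
      (∀ x ∈ rs, x ∈ Paper.quotComponent k I 1) ∧
      RingTheory.Sequence.IsWeaklyRegular (MvPolynomial (Fin (n + e + 1)) k ⧸ I) rs by
    obtain ⟨rs, hlen, hmem, hreg⟩ := this
    have hirr (x) (hx : x ∈ rs) : x ∈ Paper.irrelevantIdeal k I :=
      quotComponent_one_le_irrelevantIdeal I (hmem x hx)
    exact ⟨rs, hlen, hirr, isRegular_of_forall_mem_irrelevantIdeal hIhom hprime.ne_top hirr hreg⟩
  rcases eq_or_ne (Paper.redNumAll k I (n + 1)) 0 with hr0 | hr0
  · rw [hr0, Nat.choose_zero_right, Nat.sub_self] at hD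
    exact ⟨[], (hasDeg_zero_right hD).symm, by simp, .nil _ _⟩
  let _ := quotGradedAlgebra hIhom
  obtain ⟨ℓ, hℓ, hr⟩ := exists_quotComponent_redNumAll_le hr0
  obtain ⟨P, hdeg, hlead, hP⟩ := hD
  refine exists_isWeaklyRegular_of_choose_le (quotComponent_eq_pow I) hdim
    ((finrank_quotComponent_one_le I).trans_eq (Nat.add_right_comm n e 1)) hℓ hr hdeg hP ?_
  rw [← hlead]
  exact_mod_cast le_tsub_add

/-- Theorem 5.1: a non-degenerate projective variety (reduced and irreducible, i.e. `I_X`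
prime) of dimension `n`, codimension `e` and reduction number `r` with
`deg(X) = C(e+r, r) - 1` has `depth(R) ≥ n`: there is a regular sequence of length `n`
in the irrelevant maximal ideal of `R`. -/
theorem stmt19 (k : Type) [Field k] [IsAlgClosed k] (n e : ℕ) (he : 0 < e)
    (I : Ideal (MvPolynomial (Fin (n + e + 1)) k)) (hprime : I.IsPrime)
    (hIhom : Paper.IdealHomog k I) (hnd : Paper.Nondegenerate k I)
    (hdim : ringKrullDim (MvPolynomial (Fin (n + e + 1)) k ⧸ I) = n + 1)
    (hD : Paper.HasDeg k I n
      ((e + Paper.redNumAll k I (n + 1)).choose (Paper.redNumAll k I (n + 1)) - 1)) :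
    ∃ rs : List (MvPolynomial (Fin (n + e + 1)) k ⧸ I), rs.length = n ∧
      (∀ x ∈ rs, x ∈ Paper.irrelevantIdeal k I) ∧
      RingTheory.Sequence.IsRegular (MvPolynomial (Fin (n + e + 1)) k ⧸ I) rs := by
  exact stmt19_general k n e I hprime hIhom hdim hD
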